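/- Fix a, b ∈ ℂ with a − b ∉ Λ. Then the function G(z) = ζ₂(b−z)·f₂(a−z) − ζ₂(a−z)·f₂(b−z) + (ζ₂(a−z) − ζ₂(b−z))·f₂(a−b) − h(a−z) + h(b−z) is constant on the set {z ∈ ℂ : a − z ∉ Λ and b − z ∉ Λ}, where h(z) = ζ₂(z)·(f₂(z) + 3ζ(iδ)/(iδ)) − (2/3)·(ζ₂(z)³ + 3(ζ(iδ)/(iδ))ζ₂(z) + (1/2)℘₂′(z)). -/

import Mathlib

open Complex Filter MeasureTheory Finset

noncomputable section

/-- The period lattice with half-periods `ℓ` and `iδ`. -/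
def Lambda (ℓ δ : ℝ) : Set ℂ :=
  {z | ∃ n m : ℤ, z = 2 * (n : ℂ) * (ℓ : ℂ) + 2 * (m : ℂ) * ((δ : ℂ) * Complex.I)}

/-- The nonzero lattice points. -/
def latticePts (ℓ δ : ℝ) : Set ℂ := Lambda ℓ δ \ {0}

/-- Weierstrass ℘-function with half-periods `ℓ`, `iδ`. -/
def wP (ℓ δ : ℝ) (z : ℂ) : ℂ :=
  1 / z ^ 2 + ∑' ω : latticePts ℓ δ, (1 / (z - (ω : ℂ)) ^ 2 - 1 / (ω : ℂ) ^ 2)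

/-- Weierstrass ζ-function with half-periods `ℓ`, `iδ`. -/
def wZeta (ℓ δ : ℝ) (z : ℂ) : ℂ :=
  1 / z + ∑' ω : latticePts ℓ δ, (1 / (z - (ω : ℂ)) + 1 / (ω : ℂ) + z / (ω : ℂ) ^ 2)

def zeta2 (ℓ δ : ℝ) (z : ℂ) : ℂ :=
  wZeta ℓ δ z - (wZeta ℓ δ ((δ : ℂ) * Complex.I) / ((δ : ℂ) * Complex.I)) * z

def wp2 (ℓ δ : ℝ) (z : ℂ) : ℂ :=
  wP ℓ δ z + wZeta ℓ δ ((δ : ℂ) * Complex.I) / ((δ : ℂ) * Complex.I)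

def f2 (ℓ δ : ℝ) (z : ℂ) : ℂ := (zeta2 ℓ δ z) ^ 2 - wp2 ℓ δ z

def zeta1 (ℓ δ : ℝ) (z : ℂ) : ℂ :=
  wZeta ℓ δ z - (wZeta ℓ δ (ℓ : ℂ) / (ℓ : ℂ)) * z

/-- Bilinear dot product on `ℂ³` (no conjugation). -/
def dot3 (s t : Fin 3 → ℂ) : ℂ := s 0 * t 0 + s 1 * t 1 + s 2 * t 2

/-- Cross product on `ℂ³`. -/
def cross3 (s t : Fin 3 → ℂ) : Fin 3 → ℂ :=
  ![s 1 * t 2 - s 2 * t 1, s 2 * t 0 - s 0 * t 2, s 0 * t 1 - s 1 * t 0]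

/-- The principal-value integral operator `T`. -/
def pvT (ℓ δ : ℝ) (f : ℝ → Fin 3 → ℂ) (x : ℝ) : Fin 3 → ℂ := fun i =>
  (1 / (Real.pi : ℂ)) * limUnder (nhdsWithin (0 : ℝ) (Set.Ioi 0)) (fun ε : ℝ =>
    ∫ y in {y : ℝ | y ∈ Set.Icc (-ℓ) ℓ ∧ ε ≤ |y - x|},
      zeta1 ℓ δ ((y : ℂ) - (x : ℂ)) * f y i)

/-- The integral operator `T̃`. -/
def tilT (ℓ δ : ℝ) (f : ℝ → Fin 3 → ℂ) (x : ℝ) : Fin 3 → ℂ := fun i =>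
  (1 / (Real.pi : ℂ)) * ∫ y in Set.Icc (-ℓ) ℓ,
      zeta1 ℓ δ ((y : ℂ) - (x : ℂ) + (δ : ℂ) * Complex.I) * f y i


def zE (L : PeriodPair) (z : ℂ) : ℂ :=
  ∑' l : L.lattice, if l.1 = 0 then 0 else (1 / (z - l.1) + 1 / l.1 + z / l.1 ^ 2)

theorem zeta_bound (r : ℝ) (hr : 0 < r) (s : ℂ) (hs : ‖s‖ < r) (l : ℂ) (h : 2 * r ≤ ‖l‖) :
    ‖1 / (s - l) + 1 / l + s / l ^ 2‖ ≤ 2 * r ^ 2 * ‖l‖ ^ (-3 : ℝ) := by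
  have h1 : s - l ≠ 0 := by
    intro e
    rw [sub_eq_zero] at e
    subst e
    linarith
  have h2 : 0 < ‖l‖ := by linarith
  have h3 : l ≠ 0 := norm_pos_iff.mp h2
  have e : 1 / (s - l) + 1 / l + s / l ^ 2 = s ^ 2 / ((s - l) * l ^ 2) := by
    field_simp
    ring
  have h4 : ‖l‖ / 2 ≤ ‖s - l‖ := by
    rw [norm_sub_rev]
    exact .trans (by linarith) (norm_sub_norm_le l s)
  have e3 : ‖l‖ ^ (-3 : ℝ) = 1 / ‖l‖ ^ 3 := by
    rw [Real.rpow_neg h2.le, one_div]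
    norm_cast
  rw [e, e3, norm_div, norm_mul, norm_pow, norm_pow]
  calc ‖s‖ ^ 2 / (‖s - l‖ * ‖l‖ ^ 2) ≤ r ^ 2 / (‖l‖ / 2 * ‖l‖ ^ 2) := by gcongr
    _ = 2 * r ^ 2 * (1 / ‖l‖ ^ 3) := by field_simp

theorem hasSumLU_zE (L : PeriodPair) :
    HasSumLocallyUniformly
      (fun (l : L.lattice) (z : ℂ) ↦
        if l.1 = 0 then 0 else (1 / (z - l.1) + 1 / l.1 + z / l.1 ^ 2)) (zE L) := by
  refine L.hasSumLocallyUniformly_aux (u := fun r l ↦ 2 * r ^ 2 * ‖l‖ ^ (-3 : ℝ)) _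
    (fun _ _ ↦ (ZLattice.summable_norm_rpow _ _ (by simp; norm_num)).mul_left _) fun r hr ↦
    Filter.eventually_atTop.mpr ⟨2 * r, ?_⟩
  rintro _ h s hs l rfl
  split_ifs
  · simp only [norm_zero]
    positivity
  · exact zeta_bound r hr s hs l h

theorem term_hasDerivAt (z l : ℂ) (h : z - l ≠ 0) :
    HasDerivAt (fun z : ℂ => 1 / (z - l) + 1 / l + z / l ^ 2)
      (-(1 / (z - l) ^ 2 - 1 / l ^ 2)) z := by
  have h1 := (((hasDerivAt_id z).sub_const l).inv h)
  have h2 := ((h1.add_const (1 / l)).add ((hasDerivAt_id z).div_const (l ^ 2)))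
  simp only [id, Pi.inv_apply] at h2
  convert! h2 using 1
  · ext y
    simp [one_div]
  · ring

theorem zE_differentiableOn (L : PeriodPair) :
    DifferentiableOn ℂ (zE L) ((L.lattice : Set ℂ) \ {0})ᶜ := by
  refine (hasSumLU_zE L).hasSumLocallyUniformlyOn.differentiableOn
    (.of_forall fun s ↦ .fun_sum fun i hi ↦ ?_) L.isOpen_compl_lattice_sdiff
  split_ifs with h0
  · simp
  · intro x hx
    refine (term_hasDerivAt x i ?_).differentiableAt.differentiableWithinAt
    intro e
    obtain rfl := sub_eq_zero.mp e
    simp_all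

theorem zE_deriv (L : PeriodPair) :
    Set.EqOn (deriv (zE L)) (fun z => -L.weierstrassPExcept 0 z) ((L.lattice : Set ℂ) \ {0})ᶜ := by
  refine ((hasSumLU_zE L).tendstoLocallyUniformlyOn.deriv
    (.of_forall fun s ↦ ?_) L.isOpen_compl_lattice_sdiff).unique ?_
  · refine .fun_sum fun i hi ↦ ?_
    split_ifs
    · simp
    intro x hx
    refine (term_hasDerivAt x i ?_).differentiableAt.differentiableWithinAt
    intro e
    obtain rfl := sub_eq_zero.mp e
    simp_all
  · have := (L.hasSumLocallyUniformly_weierstrassPExcept 0).tendstoLocallyUniformlyOn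
      (s := ((L.lattice : Set ℂ) \ {0})ᶜ)
    have := this.neg
    refine this.congr ?_
    intro s x hx
    simp only [Function.comp_apply, Pi.neg_apply]
    rw [← Finset.sum_neg_distrib, deriv_fun_sum]
    · refine Finset.sum_congr rfl fun l _ => ?_
      split_ifs with hl₁
      · simp
      have hl₁ : x - l ≠ 0 := fun e ↦ hl₁ (by
        obtain rfl := sub_eq_zero.mp e
        simpa using hx)
      exact (term_hasDerivAt x l hl₁).deriv.symm
    · intro l hl
      split_ifs with hl₁
      · simp
      have hl₁ : x - l ≠ 0 := fun e ↦ hl₁ (by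
        obtain rfl := sub_eq_zero.mp e
        simpa using hx)
      exact (term_hasDerivAt x l hl₁).differentiableAt

theorem zE_neg (L : PeriodPair) (z : ℂ) : zE L (-z) = -zE L z := by
  simp only [zE]
  rw [← (Equiv.neg L.lattice).tsum_eq, ← tsum_neg]
  congr! 2 with l
  by_cases h : l.1 = 0
  · simp [h]
  · simp [h]
    rw [show -z + l.1 = -(z - l.1) by ring, inv_neg]
    ring

theorem zE_zero (L : PeriodPair) : zE L 0 = 0 := by
  have := zE_neg L 0
  rw [neg_zero] at this
  exact CharZero.eq_neg_self_iff.mp this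

/-- zeta minus a linear term. -/
def zt (L : PeriodPair) (C z : ℂ) : ℂ := 1 / z + zE L z - C * z

theorem zt_neg (L : PeriodPair) (C z : ℂ) : zt L C (-z) = - zt L C z := by
  simp only [zt, zE_neg]
  rw [div_neg]
  ring

theorem wP_eq (L : PeriodPair) (z : ℂ) :
    L.weierstrassP z = 1 / z ^ 2 + L.weierstrassPExcept 0 z := by
  have := L.weierstrassPExcept_add 0 z
  simp at this
  rw [← this]
  simp [add_comm]

theorem wP'_eq (L : PeriodPair) (z : ℂ) :
    L.derivWeierstrassP z = -2 / z ^ 3 + L.derivWeierstrassPExcept 0 z := by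
  have := L.derivWeierstrassPExcept_sub 0 z
  simp at this
  rw [← this]
  ring

theorem zE_analyticAt (L : PeriodPair) (z : ℂ) (hz : z ∈ ((L.lattice : Set ℂ) \ {0})ᶜ) :
    AnalyticAt ℂ (zE L) z :=
  (zE_differentiableOn L).analyticOnNhd L.isOpen_compl_lattice_sdiff z hz

theorem zt_analyticAt (L : PeriodPair) (C z : ℂ) (hz : z ∉ L.lattice) :
    AnalyticAt ℂ (zt L C) z := by
  have h0 : z ≠ 0 := by
    rintro rfl
    exact hz L.lattice.zero_mem
  have := zE_analyticAt L z (by simp [hz])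
  unfold zt
  fun_prop (disch := assumption)

theorem zt_hasDerivAt (L : PeriodPair) (C z : ℂ) (hz : z ∉ L.lattice) :
    HasDerivAt (zt L C) (-L.weierstrassP z - C) z := by
  have h0 : z ≠ 0 := by
    rintro rfl
    exact hz L.lattice.zero_mem
  have hm : z ∈ ((L.lattice : Set ℂ) \ {0})ᶜ := by simp [hz]
  have h1 := (zE_analyticAt L z hm).differentiableAt.hasDerivAt
  rw [zE_deriv L hm] at h1
  have h2 := ((hasDerivAt_inv h0).add h1).sub ((hasDerivAt_id z).const_mul C)
  convert! h2 using 1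
  · ext y
    simp [zt]
  · rw [wP_eq]
    field_simp
    ring

theorem zt_quasi (L : PeriodPair) (C w : ℂ) (hw : w ∈ L.lattice) :
    ∃ η, ∀ z, z ∉ L.lattice → zt L C (z + w) = zt L C z + η := by
  have hc : (L.lattice : Set ℂ).Countable := by
    have : Countable L.lattice := L.latticeEquivProd.toEquiv.countable_iff.mpr inferInstance
    exact this
  have hconn : IsPreconnected ((L.lattice : Set ℂ)ᶜ) :=
    (hc.isConnected_compl_of_one_lt_rank (by
      rw [Complex.rank_real_complex]; norm_num)).isPreconnected
  have hadd : ∀ z, z ∉ L.lattice → z + w ∉ L.lattice := fun z hz h =>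
    hz (by simpa using L.lattice.sub_mem h hw)
  have hd : ∀ z ∈ ((L.lattice : Set ℂ)ᶜ),
      HasDerivAt (fun z => zt L C (z + w) - zt L C z) 0 z := by
    intro z hz
    have h1 := (zt_hasDerivAt L C (z + w) (hadd z hz)).comp_add_const z w
    have h2 := h1.sub (zt_hasDerivAt L C z hz)
    convert! h2 using 1
    rw [L.weierstrassP_add_coe z ⟨w, hw⟩]
    ring
  have hex : ∃ η, Set.EqOn (fun z => zt L C (z + w) - zt L C z) (fun _ => η) (L.lattice : Set ℂ)ᶜ :=
    L.isClosed_lattice.isOpen_compl.exists_eq_add_of_deriv_eq hconn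
      (f := fun z => zt L C (z + w) - zt L C z) (g := fun _ => 0)
      (fun z hz => (hd z hz).differentiableAt.differentiableWithinAt)
      (by fun_prop) (fun z hz => by simp [(hd z hz).deriv]) |>.imp fun η h => by simpa using h
  obtain ⟨η, h⟩ := hex
  refine ⟨η, fun z hz => ?_⟩
  have := h hz
  simp only at this
  rw [← this]
  ring

/-- The reduced form of `G`. -/
def FF (L : PeriodPair) (C a b z : ℂ) : ℂ :=
  -(zt L C (a - z) - zt L C (b - z)) ^ 3 / 3
    + (zt L C (a - z) - zt L C (b - z)) *
      (L.weierstrassP (a - z) + L.weierstrassP (b - z) + zt L C (a - b) ^ 2 - L.weierstrassP (a - b))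
    + (L.derivWeierstrassP (a - z) - L.derivWeierstrassP (b - z)) / 3

theorem FF_swap (L : PeriodPair) (C a b z : ℂ) : FF L C a b z = - FF L C b a z := by
  unfold FF
  rw [← neg_sub b a, zt_neg, L.weierstrassP_neg]
  ring

theorem FF_periodic (L : PeriodPair) (C a b w z : ℂ) (hw : w ∈ L.lattice)
    (ha : a - z ∉ L.lattice) (hb : b - z ∉ L.lattice) :
    FF L C a b (z + w) = FF L C a b z := by
  obtain ⟨η, h⟩ := zt_quasi L C (-w) (L.lattice.neg_mem hw)
  have e1 : ∀ c : ℂ, c - (z + w) = (c - z) - w := fun c => by ring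
  unfold FF
  rw [e1 a, e1 b, L.weierstrassP_sub_coe _ ⟨w, hw⟩, L.weierstrassP_sub_coe _ ⟨w, hw⟩,
    L.derivWeierstrassP_sub_coe _ ⟨w, hw⟩, L.derivWeierstrassP_sub_coe _ ⟨w, hw⟩,
    sub_eq_add_neg (a - z), sub_eq_add_neg (b - z), h _ ha, h _ hb]
  ring

theorem FF_analyticAt (L : PeriodPair) (C a b z : ℂ)
    (ha : a - z ∉ L.lattice) (hb : b - z ∉ L.lattice) : AnalyticAt ℂ (FF L C a b) z := by
  have key : ∀ c : ℂ, c - z ∉ L.lattice → AnalyticAt ℂ (fun z => zt L C (c - z)) z ∧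
      AnalyticAt ℂ (fun z => L.weierstrassP (c - z)) z ∧
      AnalyticAt ℂ (fun z => L.derivWeierstrassP (c - z)) z := by
    intro c hc
    have hl : AnalyticAt ℂ (fun z => c - z) z := by fun_prop
    exact ⟨(zt_analyticAt L C (c - z) hc).comp hl, (L.analyticOnNhd_weierstrassP _ hc).comp hl,
      (L.analyticOnNhd_derivWeierstrassP _ hc).comp hl⟩
  obtain ⟨h1, h2, h3⟩ := key a ha
  obtain ⟨h4, h5, h6⟩ := key b hb
  unfold FF
  fun_prop

theorem dslope_analyticAt (K : ℂ → ℂ) (hK : AnalyticAt ℂ K 0) : AnalyticAt ℂ (dslope K 0) 0 := by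
  obtain ⟨p, hp⟩ := hK
  exact hp.has_fpower_series_dslope_fslope.analyticAt

theorem FF_pole (L : PeriodPair) (C a b : ℂ) (hab : a - b ∉ L.lattice) :
    ∃ g : ℂ → ℂ, AnalyticAt ℂ g a ∧ FF L C a b =ᶠ[nhdsWithin a {a}ᶜ] g := by
  have hba : b - a + 0 ∉ L.lattice := by
    rw [add_zero, ← neg_sub]
    exact fun h => hab (by simpa using L.lattice.neg_mem h)
  set M : ℂ → ℂ := fun u => zE L u - C * u - zt L C (b - a + u) with hM
  set K : ℂ → ℂ := fun u => L.weierstrassPExcept 0 u + L.weierstrassP (b - a + u)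
    - L.weierstrassP (a - b) + zt L C (a - b) ^ 2 - M u ^ 2 with hK
  set g : ℂ → ℂ := fun u => dslope K 0 u
    + M u * (L.weierstrassPExcept 0 u + L.weierstrassP (b - a + u) + zt L C (a - b) ^ 2
        - L.weierstrassP (a - b)) - M u ^ 3 / 3
    + (L.derivWeierstrassPExcept 0 u - L.derivWeierstrassP (b - a + u)) / 3 with hg
  have hl : AnalyticAt ℂ (fun u : ℂ => b - a + u) 0 := by fun_prop
  have a1 : AnalyticAt ℂ (fun u => zt L C (b - a + u)) 0 :=
    (zt_analyticAt L C _ hba).comp hl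
  have a2 : AnalyticAt ℂ (fun u => L.weierstrassP (b - a + u)) 0 :=
    (L.analyticOnNhd_weierstrassP _ hba).comp hl
  have a3 : AnalyticAt ℂ (fun u => L.derivWeierstrassP (b - a + u)) 0 :=
    (L.analyticOnNhd_derivWeierstrassP _ hba).comp hl
  have a4 : AnalyticAt ℂ (zE L) 0 := zE_analyticAt L 0 (by simp)
  have a5 := L.analyticAt_weierstrassPExcept 0
  have a6 := L.analyticAt_derivWeierstrassPExcept 0
  have aM : AnalyticAt ℂ M 0 := by
    rw [hM]
    fun_prop
  have aK : AnalyticAt ℂ K 0 := by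
    rw [hK]
    fun_prop
  have aD := dslope_analyticAt K aK
  have ag : AnalyticAt ℂ g 0 := by
    rw [hg]
    fun_prop
  have K0 : K 0 = 0 := by
    simp only [hK, hM, zE_zero, add_zero, L.weierstrassPExcept_zero]
    rw [← neg_sub a b, zt_neg, L.weierstrassP_neg]
    ring
  refine ⟨fun y => g (a - y), ?_, ?_⟩
  · have h0 : AnalyticAt ℂ g (a - a) := by rwa [sub_self]
    exact h0.comp (f := fun y => a - y) (by fun_prop)
  · filter_upwards [self_mem_nhdsWithin] with y hy
    have hy' : a - y ≠ 0 := sub_ne_zero.mpr (fun h => hy h.symm)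
    have e : b - y = b - a + (a - y) := by ring
    unfold FF
    rw [e]
    generalize a - y = u at hy'
    simp only [hg]
    rw [dslope_of_ne _ hy', slope_def_field, K0, wP_eq L u, wP'_eq L u]
    have e2 : zt L C u - zt L C (b - a + u) = 1 / u + M u := by
      simp only [hM]
      unfold zt
      ring
    rw [e2]
    simp only [hK]
    field_simp
    ring

theorem FF_ext (L : PeriodPair) (C a b : ℂ) (hab : a - b ∉ L.lattice) (z : ℂ) :
    ∃ g : ℂ → ℂ, AnalyticAt ℂ g z ∧ FF L C a b =ᶠ[nhdsWithin z {z}ᶜ] g := by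
  have main : ∀ a b : ℂ, a - b ∉ L.lattice → a - z ∈ L.lattice →
      ∃ g : ℂ → ℂ, AnalyticAt ℂ g z ∧ FF L C a b =ᶠ[nhdsWithin z {z}ᶜ] g := by
    intro a b hab ha
    obtain ⟨g, g1, g2⟩ := FF_pole L C a b hab
    have hb : b - z ∉ L.lattice := fun h => hab (by simpa using L.lattice.sub_mem ha h)
    refine ⟨fun y => g (y + (a - z)), ?_, ?_⟩
    · have : AnalyticAt ℂ g (z + (a - z)) := by simpa using g1
      exact this.comp (f := fun y => y + (a - z)) (by fun_prop)
    · have t : Tendsto (fun y => y + (a - z)) (nhdsWithin z {z}ᶜ) (nhdsWithin a {a}ᶜ) := by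
        refine tendsto_nhdsWithin_iff.mpr ⟨?_, ?_⟩
        · have : Tendsto (fun y => y + (a - z)) (nhds z) (nhds (z + (a - z))) :=
            (by fun_prop : Continuous fun y => y + (a - z)).tendsto z
          rw [add_sub_cancel] at this
          exact this.mono_left nhdsWithin_le_nhds
        · filter_upwards [self_mem_nhdsWithin] with y hy h
          apply hy
          simp at h ⊢
          linear_combination h
      have n1 : ∀ᶠ y in nhds z, b - y ∉ L.lattice :=
        (by fun_prop : Continuous fun y => b - y).continuousAt.eventually
          (L.isClosed_lattice.isOpen_compl.mem_nhds hb)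
      have n2 : ∀ᶠ y in nhds z, a - y ∈ ((L.lattice : Set ℂ) \ {a - z})ᶜ :=
        (by fun_prop : Continuous fun y => a - y).continuousAt.eventually
          (L.compl_lattice_sdiff_singleton_mem_nhds (a - z))
      filter_upwards [t.eventually g2, nhdsWithin_le_nhds n1, nhdsWithin_le_nhds n2,
        self_mem_nhdsWithin] with y h1 h2 h3 h4
      rw [← h1, FF_periodic L C a b (a - z) y ha ?_ h2]
      intro h
      apply h3
      refine ⟨h, fun h5 => h4 ?_⟩
      simp at h5
      simpa using h5
  by_cases ha : a - z ∈ L.lattice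
  · exact main a b hab ha
  by_cases hb : b - z ∈ L.lattice
  · obtain ⟨g, g1, g2⟩ := main b a (fun h => hab (by simpa using L.lattice.neg_mem h)) hb
    refine ⟨fun y => - g y, g1.neg, ?_⟩
    filter_upwards [g2] with y hy
    rw [FF_swap, hy]
  · exact ⟨_, FF_analyticAt L C a b z ha hb, by rfl⟩

theorem FF_const (L : PeriodPair) (C a b : ℂ) (hab : a - b ∉ L.lattice) (z₁ z₂ : ℂ)
    (ha1 : a - z₁ ∉ L.lattice) (hb1 : b - z₁ ∉ L.lattice)
    (ha2 : a - z₂ ∉ L.lattice) (hb2 : b - z₂ ∉ L.lattice) :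
    FF L C a b z₁ = FF L C a b z₂ := by
  choose g g1 g2 using FF_ext L C a b hab
  set H : ℂ → ℂ := fun z => g z z with hH
  -- uniqueness of the limit
  have lim : ∀ z, Tendsto (FF L C a b) (nhdsWithin z {z}ᶜ) (nhds (H z)) := fun z =>
    ((g1 z).continuousAt.tendsto.mono_left nhdsWithin_le_nhds).congr' (g2 z).symm
  have Hloc : ∀ z, H =ᶠ[nhds z] g z := by
    intro z
    have e1 : ∀ᶠ y in nhdsWithin z {z}ᶜ, H y = g z y := by
      have e2 : ∀ᶠ y in nhdsWithin z {z}ᶜ, ∀ᶠ x in nhds y, x ∈ ({z}ᶜ : Set ℂ) → FF L C a b x = g z x := by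
        have := eventually_nhdsWithin_iff.mp (g2 z)
        exact nhdsWithin_le_nhds this.eventually_nhds
      have e3 : ∀ᶠ y in nhdsWithin z {z}ᶜ, AnalyticAt ℂ (g z) y :=
        nhdsWithin_le_nhds (g1 z).eventually_analyticAt
      filter_upwards [e2, e3, self_mem_nhdsWithin] with y h2 h3 h4
      have h5 : ∀ᶠ x in nhds y, x ∈ ({z}ᶜ : Set ℂ) := isOpen_compl_singleton.mem_nhds h4
      have h6 : FF L C a b =ᶠ[nhds y] g z := by
        filter_upwards [h2, h5] with x hx hx'
        exact hx hx'
      exact tendsto_nhds_unique (lim y)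
        ((h3.continuousAt.tendsto.congr' h6.symm).mono_left nhdsWithin_le_nhds)
    have := eventually_nhdsWithin_iff.mp e1
    filter_upwards [this] with y hy
    by_cases h : y = z
    · rw [h]
    · exact hy h
  have Hdiff : Differentiable ℂ H := fun z =>
    ((g1 z).congr (Hloc z).symm).differentiableAt
  have HF : ∀ z, a - z ∉ L.lattice → b - z ∉ L.lattice → H z = FF L C a b z := by
    intro z ha hb
    exact tendsto_nhds_unique (lim z) ((FF_analyticAt L C a b z ha hb).continuousAt.tendsto.mono_left
      nhdsWithin_le_nhds)
  have gen : ∀ c z : ℂ, ∀ᶠ y in nhdsWithin z {z}ᶜ, c - y ∉ L.lattice := by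
    intro c z
    have n2 : ∀ᶠ y in nhds z, c - y ∈ ((L.lattice : Set ℂ) \ {c - z})ᶜ :=
      (by fun_prop : Continuous fun y => c - y).continuousAt.eventually
        (L.compl_lattice_sdiff_singleton_mem_nhds (c - z))
    filter_upwards [nhdsWithin_le_nhds n2, self_mem_nhdsWithin] with y h3 h4 h
    apply h3
    refine ⟨h, fun h5 => h4 ?_⟩
    simp at h5
    simpa using h5
  have Hper : ∀ z w, w ∈ L.lattice → H (z + w) = H z := by
    intro z w hw
    have t : Tendsto (fun y => y + w) (nhdsWithin z {z}ᶜ) (nhdsWithin (z + w) {z + w}ᶜ) := by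
      refine tendsto_nhdsWithin_iff.mpr ⟨?_, ?_⟩
      · exact ((by fun_prop : Continuous fun y : ℂ => y + w).tendsto z).mono_left nhdsWithin_le_nhds
      · filter_upwards [self_mem_nhdsWithin] with y hy h
        apply hy
        simpa using h
    have t2 := (lim (z + w)).comp t
    refine tendsto_nhds_unique (t2.congr' ?_) (lim z)
    filter_upwards [gen a z, gen b z] with y h1 h2
    exact FF_periodic L C a b w y hw h1 h2
  rw [← HF z₁ ha1 hb1, ← HF z₂ ha2 hb2]
  exact Hdiff.apply_eq_apply_of_bounded (IsZLattice.isCompact_range_of_periodic L.lattice _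
    Hdiff.continuous Hper).isBounded z₁ z₂

/-- The period pair of the rectangular lattice. -/
def rectPair (ℓ δ : ℝ) (hℓ : 0 < ℓ) (hδ : 0 < δ) : PeriodPair where
  ω₁ := 2 * (ℓ : ℂ)
  ω₂ := 2 * ((δ : ℂ) * Complex.I)
  indep := by
    rw [LinearIndependent.pair_iff]
    intro s t h
    have h1 := congrArg Complex.re h
    have h2 := congrArg Complex.im h
    simp at h1 h2
    exact ⟨h1.resolve_right hℓ.ne', h2.resolve_right hδ.ne'⟩

theorem mem_rect (ℓ δ : ℝ) (hℓ : 0 < ℓ) (hδ : 0 < δ) (z : ℂ) :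
    z ∈ (rectPair ℓ δ hℓ hδ).lattice ↔ z ∈ Lambda ℓ δ := by
  rw [PeriodPair.mem_lattice]
  simp only [Lambda, rectPair, Set.mem_setOf_eq]
  refine exists_congr fun n => exists_congr fun m => ?_
  constructor
  · intro h
    rw [← h]
    ring
  · intro h
    rw [h]
    ring

theorem tsum_bridge (ℓ δ : ℝ) (hℓ : 0 < ℓ) (hδ : 0 < δ) (f : ℂ → ℂ) :
    ∑' ω : latticePts ℓ δ, f (ω : ℂ) =
      ∑' l : (rectPair ℓ δ hℓ hδ).lattice, if l.1 = 0 then 0 else f l.1 := by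
  have hs : (((rectPair ℓ δ hℓ hδ).lattice : Submodule ℤ ℂ) : Set ℂ) = Lambda ℓ δ := by
    ext z
    exact mem_rect ℓ δ hℓ hδ z
  have h1 := tsum_subtype (latticePts ℓ δ) f
  have h2 := tsum_subtype (((rectPair ℓ δ hℓ hδ).lattice : Submodule ℤ ℂ) : Set ℂ)
    (fun z => if z = 0 then 0 else f z)
  rw [h1]
  refine Eq.trans ?_ h2.symm
  congr 1
  ext z
  rw [hs]
  by_cases hz : z ∈ Lambda ℓ δ <;> by_cases h0 : z = 0 <;> simp [latticePts, Set.indicator, hz, h0]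

theorem wP_bridge (ℓ δ : ℝ) (hℓ : 0 < ℓ) (hδ : 0 < δ) (z : ℂ) :
    wP ℓ δ z = (rectPair ℓ δ hℓ hδ).weierstrassP z := by
  rw [wP_eq, wP, tsum_bridge ℓ δ hℓ hδ (fun w => 1 / (z - w) ^ 2 - 1 / w ^ 2)]
  rfl

theorem wZeta_bridge (ℓ δ : ℝ) (hℓ : 0 < ℓ) (hδ : 0 < δ) (z : ℂ) :
    wZeta ℓ δ z = 1 / z + zE (rectPair ℓ δ hℓ hδ) z := by
  rw [wZeta, tsum_bridge ℓ δ hℓ hδ (fun w => 1 / (z - w) + 1 / w + z / w ^ 2)]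
  rfl

theorem deriv_wp2_bridge (ℓ δ : ℝ) (hℓ : 0 < ℓ) (hδ : 0 < δ) (z : ℂ) :
    deriv (wp2 ℓ δ) z = (rectPair ℓ δ hℓ hδ).derivWeierstrassP z := by
  have : wp2 ℓ δ = fun z => (rectPair ℓ δ hℓ hδ).weierstrassP z +
      wZeta ℓ δ ((δ : ℂ) * Complex.I) / ((δ : ℂ) * Complex.I) := by
    ext z
    rw [wp2, wP_bridge ℓ δ hℓ hδ]
  rw [this, deriv_add_const, ← PeriodPair.deriv_weierstrassP]

/-- The function `G` built from `ζ₂`, `f₂` and `h` is constant in its third argument. -/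
theorem G_constant
    (ℓ δ : ℝ) (hℓ : 0 < ℓ) (hδ : 0 < δ)
    (a b : ℂ) (hab : a - b ∉ Lambda ℓ δ) :
    ∀ z₁ ∈ {z : ℂ | a - z ∉ Lambda ℓ δ ∧ b - z ∉ Lambda ℓ δ},
    ∀ z₂ ∈ {z : ℂ | a - z ∉ Lambda ℓ δ ∧ b - z ∉ Lambda ℓ δ},
      (fun z : ℂ =>
        zeta2 ℓ δ (b - z) * f2 ℓ δ (a - z) - zeta2 ℓ δ (a - z) * f2 ℓ δ (b - z)
          + (zeta2 ℓ δ (a - z) - zeta2 ℓ δ (b - z)) * f2 ℓ δ (a - b)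
          - (fun w : ℂ =>
              zeta2 ℓ δ w * (f2 ℓ δ w + 3 * wZeta ℓ δ ((δ : ℂ) * Complex.I) / ((δ : ℂ) * Complex.I))
                - (2/3 : ℂ) * ((zeta2 ℓ δ w) ^ 3
                  + 3 * (wZeta ℓ δ ((δ : ℂ) * Complex.I) / ((δ : ℂ) * Complex.I)) * zeta2 ℓ δ w
                  + (1/2 : ℂ) * deriv (wp2 ℓ δ) w)) (a - z)
          + (fun w : ℂ =>
              zeta2 ℓ δ w * (f2 ℓ δ w + 3 * wZeta ℓ δ ((δ : ℂ) * Complex.I) / ((δ : ℂ) * Complex.I))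
                - (2/3 : ℂ) * ((zeta2 ℓ δ w) ^ 3
                  + 3 * (wZeta ℓ δ ((δ : ℂ) * Complex.I) / ((δ : ℂ) * Complex.I)) * zeta2 ℓ δ w
                  + (1/2 : ℂ) * deriv (wp2 ℓ δ) w)) (b - z)) z₁
      = (fun z : ℂ =>
        zeta2 ℓ δ (b - z) * f2 ℓ δ (a - z) - zeta2 ℓ δ (a - z) * f2 ℓ δ (b - z)
          + (zeta2 ℓ δ (a - z) - zeta2 ℓ δ (b - z)) * f2 ℓ δ (a - b)
          - (fun w : ℂ =>
              zeta2 ℓ δ w * (f2 ℓ δ w + 3 * wZeta ℓ δ ((δ : ℂ) * Complex.I) / ((δ : ℂ) * Complex.I))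
                - (2/3 : ℂ) * ((zeta2 ℓ δ w) ^ 3
                  + 3 * (wZeta ℓ δ ((δ : ℂ) * Complex.I) / ((δ : ℂ) * Complex.I)) * zeta2 ℓ δ w
                  + (1/2 : ℂ) * deriv (wp2 ℓ δ) w)) (a - z)
          + (fun w : ℂ =>
              zeta2 ℓ δ w * (f2 ℓ δ w + 3 * wZeta ℓ δ ((δ : ℂ) * Complex.I) / ((δ : ℂ) * Complex.I))
                - (2/3 : ℂ) * ((zeta2 ℓ δ w) ^ 3
                  + 3 * (wZeta ℓ δ ((δ : ℂ) * Complex.I) / ((δ : ℂ) * Complex.I)) * zeta2 ℓ δ w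
                  + (1/2 : ℂ) * deriv (wp2 ℓ δ) w)) (b - z)) z₂ := by
  intro z₁ h₁ z₂ h₂
  have key := FF_const (rectPair ℓ δ hℓ hδ)
    (wZeta ℓ δ ((δ : ℂ) * Complex.I) / ((δ : ℂ) * Complex.I)) a b
    (fun h => hab ((mem_rect ℓ δ hℓ hδ _).mp h)) z₁ z₂
    (fun h => h₁.1 ((mem_rect ℓ δ hℓ hδ _).mp h)) (fun h => h₁.2 ((mem_rect ℓ δ hℓ hδ _).mp h))
    (fun h => h₂.1 ((mem_rect ℓ δ hℓ hδ _).mp h)) (fun h => h₂.2 ((mem_rect ℓ δ hℓ hδ _).mp h))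
  have hz : ∀ w, zt (rectPair ℓ δ hℓ hδ)
      (wZeta ℓ δ ((δ : ℂ) * Complex.I) / ((δ : ℂ) * Complex.I)) w = zeta2 ℓ δ w := by
    intro w
    rw [zt, ← wZeta_bridge, zeta2]
  have hp : ∀ w, (rectPair ℓ δ hℓ hδ).weierstrassP w = wp2 ℓ δ w -
      wZeta ℓ δ ((δ : ℂ) * Complex.I) / ((δ : ℂ) * Complex.I) := by
    intro w
    rw [← wP_bridge, wp2]
    ring
  simp only [FF, hz, hp, ← deriv_wp2_bridge] at key
  simp only [f2]
  linear_combination key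

end
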